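/- arXiv:2508.14299 — 2 statements merged into one kernel-verified Lean document; each statement's English description precedes it below -/
import Mathlib

section
/- Let f : ℝⁿ → ℝⁿ be continuously differentiable (C¹) and let X : ℝ × ℝⁿ → ℝⁿ be a jointly C¹ map satisfying X(τ₀, ξ) = ξ for every ξ ∈ ℝⁿ, and such that for every (τ, ξ), the curve σ ↦ X(σ, ξ) has derivative f(X(τ, ξ)) at τ. Fix ξ ∈ ℝⁿ and define Φ(τ) to be the Fréchet derivative of the map ξ' ↦ X(τ, ξ') at ξ, viewed as a continuous linear map ℝⁿ → ℝⁿ. Then Φ(τ₀) is the identity map and, for every τ, the curve Φ (with values in the space of continuous linear maps ℝⁿ → ℝⁿ) has derivative Df(X(τ, ξ)) ∘ Φ(τ) at τ; that is, Φ solves the variational equation dΦ/dτ = (∂f/∂x)(X(τ, ξ)) Φ(τ) with Φ(τ₀) = I. -/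
/-!
The variational equation is the interchange of `∂/∂τ` and `∂/∂ξ` in `∂X/∂τ = f ∘ X`: the chain rule
computes `∂/∂ξ (f ∘ X)`, which is continuous, and continuity of one mixed derivative allows the
interchange. If that mixed derivative stays within `ε` of `L` near a point, applying the mean value
inequality first in `ξ` and then in `τ` shows that `X(s, ·) - X(t, ·) - (s - t) L` is Lipschitz with
constant `ε |s - t|`, and this constant bounds the norm of its derivative in `ξ`.
-/

open Filter Topology

section MixedDerivatives

variable {𝕜 E F : Type*} [RCLike 𝕜] [NormedAddCommGroup E] [NormedSpace 𝕜 E]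
  [NormedAddCommGroup F] [NormedSpace 𝕜 F]

theorem norm_increment_sub_increment_le_of_convex [NormedSpace ℝ E] {S : Set 𝕜} {B : Set E}
    (hS : Convex ℝ S) (hB : Convex ℝ B) {g g' : 𝕜 × E → F} {G : 𝕜 × E → E →L[𝕜] F}
    {L : E →L[𝕜] F} {C : ℝ}
    (hg : ∀ s ∈ S, ∀ y ∈ B, HasDerivWithinAt (fun r => g (r, y)) (g' (s, y)) S s)
    (hg' : ∀ s ∈ S, ∀ y ∈ B, HasFDerivWithinAt (fun z => g' (s, z)) (G (s, y)) B y)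
    (hG : ∀ s ∈ S, ∀ y ∈ B, ‖G (s, y) - L‖ ≤ C)
    {s t : 𝕜} (hs : s ∈ S) (ht : t ∈ S) {y z : E} (hy : y ∈ B) (hz : z ∈ B) :
    ‖(g (s, y) - g (t, y) - (s - t) • L y) - (g (s, z) - g (t, z) - (s - t) • L z)‖ ≤
      C * ‖s - t‖ * ‖y - z‖ := by
  have hderiv : ∀ r ∈ S, HasDerivWithinAt (fun r => g (r, y) - g (r, z) - r • L (y - z))
      (g' (r, y) - g' (r, z) - L (y - z)) S r := fun r hr => by
    simpa using ((hg r hr y hy).fun_sub (hg r hr z hz)).fun_sub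
      ((hasDerivWithinAt_id r S).smul_const (L (y - z)))
  have hbound : ∀ r ∈ S, ‖g' (r, y) - g' (r, z) - L (y - z)‖ ≤ C * ‖y - z‖ := fun r hr =>
    hB.norm_image_sub_le_of_norm_hasFDerivWithin_le' (hg' r hr) (hG r hr) hz hy
  calc
    _ = ‖(g (s, y) - g (s, z) - s • L (y - z)) - (g (t, y) - g (t, z) - t • L (y - z))‖ := by
      rw [map_sub]
      congr 1
      module
    _ ≤ C * ‖y - z‖ * ‖s - t‖ :=
      hS.norm_image_sub_le_of_norm_hasDerivWithin_le hderiv hbound ht hs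
    _ = C * ‖s - t‖ * ‖y - z‖ := mul_right_comm _ _ _

theorem hasDerivAt_partial_fderiv_of_continuousAt_mixed {g g' : 𝕜 × E → F} {G : 𝕜 × E → E →L[𝕜] F}
    {Φ : 𝕜 → E →L[𝕜] F} {t : 𝕜} {x : E}
    (hg : ∀ᶠ p in 𝓝 (t, x), HasDerivAt (fun s => g (s, p.2)) (g' p) p.1)
    (hΦ : ∀ᶠ s in 𝓝 t, HasFDerivAt (fun y => g (s, y)) (Φ s) x)
    (hg' : ∀ᶠ p in 𝓝 (t, x), HasFDerivAt (fun y => g' (p.1, y)) (G p) p.2)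
    (hG : ContinuousAt G (t, x)) :
    HasDerivAt Φ (G (t, x)) t := by
  let : NormedSpace ℝ E := NormedSpace.restrictScalars ℝ 𝕜 E
  refine HasDerivAt.of_isLittleO (Asymptotics.isLittleO_iff.2 fun ε hε => ?_)
  have hGε : ∀ᶠ p in 𝓝 (t, x), ‖G p - G (t, x)‖ ≤ ε :=
    (hG.eventually (Metric.closedBall_mem_nhds _ hε)).mono fun _ => mem_closedBall_iff_norm.1
  obtain ⟨δ, hδ, hball⟩ := Metric.eventually_nhds_iff_ball.1 (hg.and (hg'.and hGε))
  have hprod : ∀ s ∈ Metric.ball t δ, ∀ y ∈ Metric.ball x δ, (s, y) ∈ Metric.ball (t, x) δ :=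
    fun s hs y hy => ball_prod_same t x δ ▸ Set.mk_mem_prod hs hy
  have ht : t ∈ Metric.ball t δ := Metric.mem_ball_self hδ
  have hx : x ∈ Metric.ball x δ := Metric.mem_ball_self hδ
  filter_upwards [hΦ, Metric.ball_mem_nhds t hδ] with s hΦs hs
  have hfderiv : HasFDerivAt (fun y => g (s, y) - g (t, y) - (s - t) • G (t, x) y)
      (Φ s - Φ t - (s - t) • G (t, x)) x :=
    (hΦs.sub hΦ.self_of_nhds).sub ((s - t) • G (t, x)).hasFDerivAt
  refine hfderiv.le_of_lip' (by positivity) ?_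
  filter_upwards [Metric.ball_mem_nhds x hδ] with y hy
  exact norm_increment_sub_increment_le_of_convex (convex_ball t δ) (convex_ball x δ)
    (fun r hr z hz => (hball _ (hprod r hr z hz)).1.hasDerivWithinAt)
    (fun r hr z hz => (hball _ (hprod r hr z hz)).2.1.hasFDerivWithinAt)
    (fun r hr z hz => (hball _ (hprod r hr z hz)).2.2) hs ht hy hx

end MixedDerivatives

section Flow

variable {𝕜 E : Type*} [RCLike 𝕜] [NormedAddCommGroup E] [NormedSpace 𝕜 E]

theorem hasDerivAt_fderiv_of_flow {f : E → E} {X : 𝕜 × E → E} {τ : 𝕜} {ξ : E}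
    (hf : ContDiffAt 𝕜 1 f (X (τ, ξ))) (hX : ContDiffAt 𝕜 1 X (τ, ξ))
    (hflow : ∀ᶠ p in 𝓝 (τ, ξ), HasDerivAt (fun σ => X (σ, p.2)) (f (X p)) p.1) :
    HasDerivAt (fun σ => fderiv 𝕜 (fun η => X (σ, η)) ξ)
      ((fderiv 𝕜 f (X (τ, ξ))).comp (fderiv 𝕜 (fun η => X (τ, η)) ξ)) τ := by
  let dX : 𝕜 × E → E →L[𝕜] E := fun p => (fderiv 𝕜 X p).comp (.inr 𝕜 𝕜 E)
  have hdX : ∀ᶠ p in 𝓝 (τ, ξ), HasFDerivAt (fun η => X (p.1, η)) (dX p) p.2 :=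
    (hX.eventually (by simp)).mono fun p hp =>
      (hp.differentiableAt one_ne_zero).hasFDerivAt.comp p.2 (hasFDerivAt_prodMk_right p.1 p.2)
  have hfX : ∀ᶠ p in 𝓝 (τ, ξ),
      HasFDerivAt (fun η => f (X (p.1, η))) ((fderiv 𝕜 f (X p)).comp (dX p)) p.2 := by
    filter_upwards [hdX, hX.continuousAt.eventually (hf.eventually (by simp))] with p hXp hfp
    exact (hfp.differentiableAt one_ne_zero).hasFDerivAt.comp p.2 hXp
  have hcont : ContinuousAt (fun p => (fderiv 𝕜 f (X p)).comp (dX p)) (τ, ξ) :=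
    ((hf.continuousAt_fderiv one_ne_zero).comp hX.continuousAt).clm_comp
      ((hX.continuousAt_fderiv one_ne_zero).clm_comp continuousAt_const)
  have hsection : ∀ᶠ σ in 𝓝 τ,
      HasFDerivAt (fun η => X (σ, η)) (fderiv 𝕜 (fun η => X (σ, η)) ξ) ξ :=
    ((Continuous.prodMk_left ξ).tendsto τ |>.eventually hdX).mono fun _ h =>
      h.differentiableAt.hasFDerivAt
  rw [hdX.self_of_nhds.fderiv]
  exact hasDerivAt_partial_fderiv_of_continuousAt_mixed hflow hsection hfX hcont

theorem variational_equation_state_general {f : E → E} {X : 𝕜 × E → E} {I : Set 𝕜} {τ₀ : 𝕜}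
    {ξ : E} {Φ : 𝕜 → E →L[𝕜] E}
    (hf : ∀ τ ∈ I, ContDiffAt 𝕜 1 f (X (τ, ξ))) (hX : ∀ τ ∈ I, ContDiffAt 𝕜 1 X (τ, ξ))
    (hinit : ∀ᶠ η in 𝓝 ξ, X (τ₀, η) = η)
    (hflow : ∀ τ ∈ I, ∀ᶠ p in 𝓝 (τ, ξ), HasDerivAt (fun σ => X (σ, p.2)) (f (X p)) p.1)
    (hΦ : ∀ τ, Φ τ = fderiv 𝕜 (fun η => X (τ, η)) ξ) :
    Φ τ₀ = ContinuousLinearMap.id 𝕜 E ∧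
      ∀ τ ∈ I, HasDerivAt Φ ((fderiv 𝕜 f (X (τ, ξ))).comp (Φ τ)) τ := by
  obtain rfl : Φ = fun τ => fderiv 𝕜 (fun η => X (τ, η)) ξ := funext hΦ
  exact ⟨(EventuallyEq.fderiv_eq hinit).trans fderiv_fun_id,
    fun τ hτ => hasDerivAt_fderiv_of_flow (hf τ hτ) (hX τ hτ) (hflow τ hτ)⟩

end Flow

/-- Variational equation for the state Jacobian of a flow: if `f` is `C¹`, the
flow `X` is jointly `C¹` with `X (τ₀, ξ) = ξ` and `∂X/∂τ = f ∘ X`, then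
`Φ τ := ∂X(τ,·)/∂ξ` satisfies `Φ τ₀ = I` and `dΦ/dτ = Df(X(τ,ξ)) ∘ Φ τ`. -/
theorem variational_equation_state {n : ℕ}
    (f : EuclideanSpace ℝ (Fin n) → EuclideanSpace ℝ (Fin n))
    (hf : ContDiff ℝ 1 f)
    (X : ℝ × EuclideanSpace ℝ (Fin n) → EuclideanSpace ℝ (Fin n))
    (hX : ContDiff ℝ 1 X)
    (τ₀ : ℝ)
    (hinit : ∀ ξ, X (τ₀, ξ) = ξ)
    (hflow : ∀ τ ξ, HasDerivAt (fun σ => X (σ, ξ)) (f (X (τ, ξ))) τ)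
    (ξ : EuclideanSpace ℝ (Fin n))
    (Φ : ℝ → (EuclideanSpace ℝ (Fin n) →L[ℝ] EuclideanSpace ℝ (Fin n)))
    (hΦ : ∀ τ, Φ τ = fderiv ℝ (fun ξ' => X (τ, ξ')) ξ) :
    Φ τ₀ = ContinuousLinearMap.id ℝ (EuclideanSpace ℝ (Fin n)) ∧
      ∀ τ, HasDerivAt Φ ((fderiv ℝ f (X (τ, ξ))).comp (Φ τ)) τ := by
  simpa using variational_equation_state_general (I := Set.univ) (fun _ _ => hf.contDiffAt)
    (fun _ _ => hX.contDiffAt) (.of_forall hinit) (fun _ _ => .of_forall fun p => hflow p.1 p.2) hΦ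
end

section
/- Let f : ℝⁿ × ℝᵐ → ℝⁿ be continuously differentiable (C¹), let ξ₀ ∈ ℝⁿ, and let X : ℝ × ℝᵐ → ℝⁿ be a jointly C¹ map satisfying X(τ₀, η) = ξ₀ for every η ∈ ℝᵐ, and such that for every (τ, η), the curve σ ↦ X(σ, η) has derivative f(X(τ, η), η) at τ. Fix η ∈ ℝᵐ and define Ψ(τ) to be the Fréchet derivative of the map η' ↦ X(τ, η') at η, viewed as a continuous linear map ℝᵐ → ℝⁿ. Then Ψ(τ₀) = 0 and, for every τ, the curve Ψ (with values in the space of continuous linear maps ℝᵐ → ℝⁿ) has derivative (∂f/∂x)(X(τ, η), η) ∘ Ψ(τ) + (∂f/∂u)(X(τ, η), η) at τ; that is, Ψ solves the variational equation dΨ/dτ = (∂f/∂x) Ψ(τ) + (∂f/∂u) with Ψ(τ₀) = 0. -/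
/-!
The input Jacobian satisfies the differentiated equation as soon as `∂/∂τ` and `∂/∂η` may be
exchanged on `X`. As `X` is only `C¹`, symmetry of second derivatives is not available, but
`∂X/∂τ` is the `C¹` function `g (τ, η) = f (X (τ, η), η)`. With `G = ∂g/∂η` at `(τ, η)`, apply the
mean value inequality to `σ ↦ X (σ, u) - X (σ, η) - σ • G (u - η)`, whose derivative is `o(u - η)`
uniformly for `σ` near `τ`: this bounds the increments in `u` of the error
`X (σ, u) - X (τ, u) - (σ - τ) • G u`, and hence the derivative of this error at `u = η`, which is
therefore `o(σ - τ)`. The chain rule for `g` identifies `G` with the right-hand side.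
-/

open Asymptotics Filter Topology

section PartialDerivatives

variable {𝕜 : Type*} [NontriviallyNormedField 𝕜]
  {T : Type*} [NormedAddCommGroup T] [NormedSpace 𝕜 T]
  {E : Type*} [NormedAddCommGroup E] [NormedSpace 𝕜 E]
  {F : Type*} [NormedAddCommGroup F] [NormedSpace 𝕜 F]
  {U : Type*} [NormedAddCommGroup U] [NormedSpace 𝕜 U]

theorem isLittleO_sub_sub_snd_of_hasStrictFDerivAt {g : T × U → E} {g' : T × U →L[𝕜] E}
    {G : U →L[𝕜] E} {τ : T} {η : U} (hg : HasStrictFDerivAt g g' (τ, η))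
    (hG : HasFDerivAt (fun u => g (τ, u)) G η) :
    (fun p : T × U => g p - g (p.1, η) - G (p.2 - η)) =o[𝓝 (τ, η)] fun p => p.2 - η := by
  have hG_eq : G = g'.comp (.inr 𝕜 T U) :=
    hG.unique (hg.hasFDerivAt.comp η (hasFDerivAt_prodMk_right τ η))
  have hpair : Tendsto (fun p : T × U => (p, (p.1, η))) (𝓝 (τ, η)) (𝓝 ((τ, η), (τ, η))) :=
    Continuous.tendsto' (by fun_prop) _ _ rfl
  refine ((hg.isLittleO.comp_tendsto hpair).congr_left fun p => ?_).trans_isBigO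
    (isBigO_of_le _ fun p => ?_)
  · simp [hG_eq, -map_sub, Prod.sub_def]
  · simp [Prod.norm_def]

theorem hasFDerivAt_comp_prodMk_id_of_differentiableAt {f : E × U → F} {x : U → E}
    {x' : U →L[𝕜] E} {η : U} (hf : DifferentiableAt 𝕜 f (x η, η)) (hx : HasFDerivAt x x' η) :
    HasFDerivAt (fun u => f (x u, u))
      ((fderiv 𝕜 (fun e => f (e, η)) (x η)).comp x' + fderiv 𝕜 (fun u => f (x η, u)) η) η := by
  have hfst : fderiv 𝕜 (fun e => f (e, η)) (x η) = (fderiv 𝕜 f (x η, η)).comp (.inl 𝕜 E U) :=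
    (hf.hasFDerivAt.comp (x η) (hasFDerivAt_prodMk_left (x η) η)).fderiv
  have hsnd : fderiv 𝕜 (fun u => f (x η, u)) η = (fderiv 𝕜 f (x η, η)).comp (.inr 𝕜 E U) :=
    (hf.hasFDerivAt.comp η (hasFDerivAt_prodMk_right (x η) η)).fderiv
  have hcomp : HasFDerivAt (fun u => f (x u, u))
      ((fderiv 𝕜 f (x η, η)).comp (x'.prod (.id 𝕜 U))) η :=
    HasFDerivAt.comp (f := fun u => (x u, u)) η hf.hasFDerivAt (hx.prodMk (hasFDerivAt_id η))
  convert hcomp using 1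
  ext v
  simp [hfst, hsnd, ← map_add]

end PartialDerivatives

section InputJacobian

variable {𝕜 : Type*} [RCLike 𝕜]
  {E : Type*} [NormedAddCommGroup E] [NormedSpace 𝕜 E]
  {U : Type*} [NormedAddCommGroup U] [NormedSpace 𝕜 U]

theorem norm_sub_sub_smul_le_of_norm_hasDerivAt_sub_le {x y x' y' : 𝕜 → E} {e : E} {C : ℝ}
    {s : Set 𝕜} (hs : Convex ℝ s) (hx : ∀ σ ∈ s, HasDerivAt x (x' σ) σ)
    (hy : ∀ σ ∈ s, HasDerivAt y (y' σ) σ) (hC : ∀ σ ∈ s, ‖x' σ - y' σ - e‖ ≤ C)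
    {σ τ : 𝕜} (hσ : σ ∈ s) (hτ : τ ∈ s) :
    ‖x σ - x τ - (y σ - y τ) - (σ - τ) • e‖ ≤ C * ‖σ - τ‖ := by
  have hderiv : ∀ ρ ∈ s, HasDerivWithinAt (fun ρ => x ρ - y ρ - ρ • e) (x' ρ - y' ρ - e) s ρ := by
    intro ρ hρ
    simpa [Pi.sub_def] using
      (((hx ρ hρ).sub (hy ρ hρ)).sub ((hasDerivAt_id ρ).smul_const e)).hasDerivWithinAt
  convert hs.norm_image_sub_le_of_norm_hasDerivWithin_le hderiv hC hτ hσ using 2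
  rw [sub_smul]
  abel

theorem hasDerivAt_fderiv_of_isLittleO {X g : 𝕜 × U → E} {G : U →L[𝕜] E} {τ : 𝕜} {η : U}
    (hX : ∀ᶠ σ in 𝓝 τ, DifferentiableAt 𝕜 (fun u => X (σ, u)) η)
    (hderiv : ∀ᶠ p in 𝓝 (τ, η), HasDerivAt (fun σ => X (σ, p.2)) (g p) p.1)
    (hg : (fun p : 𝕜 × U => g p - g (p.1, η) - G (p.2 - η)) =o[𝓝 (τ, η)] fun p => p.2 - η) :
    HasDerivAt (fun σ => fderiv 𝕜 (fun u => X (σ, u)) η) G τ := by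
  rw [hasDerivAt_iff_isLittleO, isLittleO_iff]
  intro ε hε
  obtain ⟨r, hr, hball⟩ := Metric.eventually_nhds_iff_ball.1 (hderiv.and (hg.bound hε))
  simp only [← ball_prod_same, Set.mem_prod, and_imp, Prod.forall] at hball
  filter_upwards [hX, Metric.ball_mem_nhds τ hr] with σ hXσ hσ
  have herror : HasFDerivAt (fun u => X (σ, u) - X (τ, u) - (σ - τ) • G u)
      (fderiv 𝕜 (fun u => X (σ, u)) η - fderiv 𝕜 (fun u => X (τ, u)) η - (σ - τ) • G) η :=
    (hXσ.hasFDerivAt.sub hX.self_of_nhds.hasFDerivAt).sub (G.hasFDerivAt.const_smul (σ - τ))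
  refine herror.le_of_lip' (by positivity) ?_
  filter_upwards [Metric.ball_mem_nhds η hr] with u hu
  have hincrement := norm_sub_sub_smul_le_of_norm_hasDerivAt_sub_le (convex_ball τ r)
    (fun ρ hρ => (hball ρ u hρ hu).1)
    (fun ρ hρ => (hball ρ η hρ (Metric.mem_ball_self hr)).1)
    (fun ρ hρ => (hball ρ u hρ hu).2) hσ (Metric.mem_ball_self hr)
  calc ‖X (σ, u) - X (τ, u) - (σ - τ) • G u - (X (σ, η) - X (τ, η) - (σ - τ) • G η)‖
      = ‖X (σ, u) - X (τ, u) - (X (σ, η) - X (τ, η)) - (σ - τ) • G (u - η)‖ := by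
        rw [map_sub, smul_sub]; congr 1; abel
    _ ≤ ε * ‖u - η‖ * ‖σ - τ‖ := hincrement
    _ = ε * ‖σ - τ‖ * ‖u - η‖ := by ring

theorem hasDerivAt_fderiv_of_contDiffAt {f : E × U → E} {X : 𝕜 × U → E} {τ : 𝕜} {η : U}
    (hf : ContDiffAt 𝕜 1 f (X (τ, η), η)) (hX : ContDiffAt 𝕜 1 X (τ, η))
    (hflow : ∀ᶠ p in 𝓝 (τ, η), HasDerivAt (fun σ => X (σ, p.2)) (f (X p, p.2)) p.1) :
    HasDerivAt (fun σ => fderiv 𝕜 (fun u => X (σ, u)) η)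
      ((fderiv 𝕜 (fun x => f (x, η)) (X (τ, η))).comp (fderiv 𝕜 (fun u => X (τ, u)) η)
        + fderiv 𝕜 (fun u => f (X (τ, η), u)) η) τ := by
  have hX_input : ∀ᶠ σ in 𝓝 τ, DifferentiableAt 𝕜 (fun u => X (σ, u)) η := by
    have hslice : Tendsto (fun σ : 𝕜 => (σ, η)) (𝓝 τ) (𝓝 (τ, η)) :=
      Continuous.tendsto' (by fun_prop) _ _ rfl
    filter_upwards [hslice.eventually (hX.eventually (by simp))] with σ hσ
    exact (hσ.differentiableAt one_ne_zero).comp η (by fun_prop)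
  have hg : ContDiffAt 𝕜 1 (fun p : 𝕜 × U => f (X p, p.2)) (τ, η) :=
    hf.comp (τ, η) (hX.prodMk contDiffAt_snd)
  have hg_input := hasFDerivAt_comp_prodMk_id_of_differentiableAt
    (hf.differentiableAt one_ne_zero) hX_input.self_of_nhds.hasFDerivAt
  exact hasDerivAt_fderiv_of_isLittleO hX_input hflow
    (isLittleO_sub_sub_snd_of_hasStrictFDerivAt (hg.hasStrictFDerivAt one_ne_zero) hg_input)

theorem variational_equation_input_general {f : E × U → E} {X : 𝕜 × U → E} {D : Set (𝕜 × U)}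
    (hD : IsOpen D) (hf : ∀ p ∈ D, ContDiffAt 𝕜 1 f (X p, p.2)) (hX : ContDiffOn 𝕜 1 X D)
    (hflow : ∀ p ∈ D, HasDerivAt (fun σ => X (σ, p.2)) (f (X p, p.2)) p.1)
    {τ₀ : 𝕜} {ξ₀ : E} {η : U} (hτ₀ : (τ₀, η) ∈ D)
    (hinit : ∀ η', (τ₀, η') ∈ D → X (τ₀, η') = ξ₀)
    {Ψ : 𝕜 → U →L[𝕜] E} (hΨ : ∀ τ, (τ, η) ∈ D → Ψ τ = fderiv 𝕜 (fun η' => X (τ, η')) η) :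
    Ψ τ₀ = 0 ∧
      ∀ τ, (τ, η) ∈ D → HasDerivAt Ψ
        ((fderiv 𝕜 (fun x' => f (x', η)) (X (τ, η))).comp (Ψ τ)
          + fderiv 𝕜 (fun u' => f (X (τ, η), u')) η) τ := by
  constructor
  · have hconst : (fun η' => X (τ₀, η')) =ᶠ[𝓝 η] fun _ => ξ₀ :=
      ((hD.preimage (Continuous.prodMk_right τ₀)).eventually_mem hτ₀).mono hinit
    rw [hΨ τ₀ hτ₀, hconst.fderiv_eq, fderiv_const_apply]
  · intro τ hτ
    have hΨ_near : Ψ =ᶠ[𝓝 τ] fun σ => fderiv 𝕜 (fun u => X (σ, u)) η :=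
      ((hD.preimage (Continuous.prodMk_left η)).eventually_mem hτ).mono hΨ
    rw [hΨ τ hτ]
    exact (hasDerivAt_fderiv_of_contDiffAt (hf _ hτ) (hX.contDiffAt (hD.mem_nhds hτ))
      ((hD.eventually_mem hτ).mono hflow)).congr_of_eventuallyEq hΨ_near

end InputJacobian

/-- Variational equation for the input Jacobian of a flow: if `f` is `C¹`, the
flow `X` is jointly `C¹` with `X (τ₀, η) = ξ₀` and `∂X/∂τ = f(X, η)`, then
`Ψ τ := ∂X(τ,·)/∂η` satisfies `Ψ τ₀ = 0` and
`dΨ/dτ = (∂f/∂x) ∘ Ψ τ + ∂f/∂u`. -/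
theorem variational_equation_input {n m : ℕ}
    (f : EuclideanSpace ℝ (Fin n) × EuclideanSpace ℝ (Fin m) → EuclideanSpace ℝ (Fin n))
    (hf : ContDiff ℝ 1 f)
    (ξ₀ : EuclideanSpace ℝ (Fin n))
    (X : ℝ × EuclideanSpace ℝ (Fin m) → EuclideanSpace ℝ (Fin n))
    (hX : ContDiff ℝ 1 X)
    (τ₀ : ℝ)
    (hinit : ∀ η, X (τ₀, η) = ξ₀)
    (hflow : ∀ τ η, HasDerivAt (fun σ => X (σ, η)) (f (X (τ, η), η)) τ)
    (η : EuclideanSpace ℝ (Fin m))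
    (Ψ : ℝ → (EuclideanSpace ℝ (Fin m) →L[ℝ] EuclideanSpace ℝ (Fin n)))
    (hΨ : ∀ τ, Ψ τ = fderiv ℝ (fun η' => X (τ, η')) η) :
    Ψ τ₀ = 0 ∧
      ∀ τ, HasDerivAt Ψ
        ((fderiv ℝ (fun x' => f (x', η)) (X (τ, η))).comp (Ψ τ)
          + fderiv ℝ (fun u' => f (X (τ, η), u')) η) τ := by
  simpa using variational_equation_input_general isOpen_univ (fun _ _ => hf.contDiffAt)
    hX.contDiffOn (fun p _ => hflow p.1 p.2) (Set.mem_univ (τ₀, η)) (fun η' _ => hinit η')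
    (fun τ _ => hΨ τ)
end
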